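/- Consider the elastic von Karman beam system on [L₀,L]×[0,T+h] and its time-difference (u_d, v_d) with step h, and let M > 0. Assume the overdetermined boundary conditions u_d(L₀,t) = u_dx(L₀,t) = u_dxx(L₀,t) = u_dxxx(L₀,t) = v_d(L₀,t) = v_dx(L₀,t) = 0 and u_d(L,t) = u_dxx(L,t) = v_d(L,t) = 0 for all t ∈ [0,T]. Then there exists T₀ > 0, depending only on β₂, μ₂, λ₂, ρ₂, L₀, L, h, M, such that if T ≥ T₀ then for every M-bounded solution (u,v) one has u_d ≡ 0 and v_d ≡ 0 on [L₀,L]×[0,T] (unique continuation for the overdetermined problem). -/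

import Mathlib

open MeasureTheory

noncomputable section

/-- Partial derivative in the first (space) variable. -/
def pdx (f : ℝ → ℝ → ℝ) : ℝ → ℝ → ℝ := fun x t => deriv (fun y => f y t) x

/-- Partial derivative in the second (time) variable. -/
def pdt (f : ℝ → ℝ → ℝ) : ℝ → ℝ → ℝ := fun x t => deriv (fun s => f x s) t

/-- Time difference with step `h`. -/
def tdiff (h : ℝ) (f : ℝ → ℝ → ℝ) : ℝ → ℝ → ℝ := fun x t => f x (t + h) - f x t

/-- The elastic full von Karman beam system on `[L₀,L] × [0,Th]`. -/
def VKBeam (β₂ μ₂ lam₂ ρ₂ L₀ L Th : ℝ) (u v : ℝ → ℝ → ℝ) : Prop :=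
  ∀ x ∈ Set.Icc L₀ L, ∀ t ∈ Set.Icc (0:ℝ) Th,
    β₂ * pdt (pdt u) x t - μ₂ * pdx (pdx (pdt (pdt u))) x t
        + lam₂ * pdx (pdx (pdx (pdx u))) x t
        - pdx (fun y s => pdx u y s * (pdx v y s + (pdx u y s) ^ 2 / 2)) x t = 0 ∧
    ρ₂ * pdt (pdt v) x t - pdx (fun y s => pdx v y s + (pdx u y s) ^ 2 / 2) x t = 0

/-- `f` has all partial derivatives of order at most 4 bounded by `M` on
`[L₀,L] × [0,Th]`. -/
def MBounded (M L₀ L Th : ℝ) (f : ℝ → ℝ → ℝ) : Prop :=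
  ∀ k : ℕ, k ≤ 4 → ∀ x ∈ Set.Icc L₀ L, ∀ t ∈ Set.Icc (0:ℝ) Th,
    ‖iteratedFDeriv ℝ k (Function.uncurry f) (x, t)‖ ≤ M

end

/-!
Let `w = tdiff h u` and `z = tdiff h v`. Read with the roles of `x` and `t` exchanged, the beam
equation is a wave equation for the slope `w_x` coupled to first-order equations in `x` for the
moment `p = lam w_xx - μ w_tt` and the corrected shear `p_x + (β lam / μ) w_x - S`, where `S` is the
extra shear force; the point of the correction is that its `x`-derivative is `(β / μ) p`, with no
second derivative left over. Hence the zero Cauchy data at `L₀` propagate in `x`: an energy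
weighted by a cutoff adapted to the triangle of dependence, of slowness
`c = max √(μ / lam) √ρ`, shows that `w` and `z` vanish on that triangle. If `T > 2 c (L - L₀)`, the
triangle contains a strip `[L₀, L] × (T/2 - ε, T/2 + ε)`, so all data at time `T/2` vanish, and the
ordinary energy, whose flux vanishes at the hinged ends, gives `w = z = 0` at all times by
Grönwall's inequality, forwards and backwards from `T/2`.
-/

open Set Filter Asymptotics Function
open scoped ContDiff Topology

section PartialDerivatives

variable {f : ℝ → ℝ → ℝ}

theorem hasDerivAt_pdx (hf : Differentiable ℝ (uncurry f)) (x t : ℝ) :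
    HasDerivAt (fun y => f y t) (pdx f x t) x :=
  (hf.comp (by fun_prop : Differentiable ℝ fun y : ℝ => (y, t)) x).hasDerivAt

theorem hasDerivAt_pdt (hf : Differentiable ℝ (uncurry f)) (x t : ℝ) :
    HasDerivAt (fun s => f x s) (pdt f x t) t :=
  (hf.comp (by fun_prop : Differentiable ℝ fun s : ℝ => (x, s)) t).hasDerivAt

theorem uncurry_pdx_eq_fderiv (hf : Differentiable ℝ (uncurry f)) :
    uncurry (pdx f) = fun p => fderiv ℝ (uncurry f) p (1, 0) := by
  ext ⟨x, t⟩
  exact ((hf (x, t)).hasFDerivAt.comp_hasDerivAt (f := fun y : ℝ => (y, t)) x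
    ((hasDerivAt_id x).prodMk (hasDerivAt_const x t))).deriv

theorem uncurry_pdt_eq_fderiv (hf : Differentiable ℝ (uncurry f)) :
    uncurry (pdt f) = fun p => fderiv ℝ (uncurry f) p (0, 1) := by
  ext ⟨x, t⟩
  exact ((hf (x, t)).hasFDerivAt.comp_hasDerivAt (f := fun s : ℝ => (x, s)) t
    ((hasDerivAt_const t x).prodMk (hasDerivAt_id t))).deriv

theorem contDiff_uncurry_pdx {m n : WithTop ℕ∞} (hf : ContDiff ℝ n (uncurry f))
    (hmn : m + 1 ≤ n) : ContDiff ℝ m (uncurry (pdx f)) := by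
  rw [uncurry_pdx_eq_fderiv ((hf.of_le (le_add_self.trans hmn)).differentiable one_ne_zero)]
  exact (hf.fderiv_right hmn).clm_apply contDiff_const

theorem contDiff_uncurry_pdt {m n : WithTop ℕ∞} (hf : ContDiff ℝ n (uncurry f))
    (hmn : m + 1 ≤ n) : ContDiff ℝ m (uncurry (pdt f)) := by
  rw [uncurry_pdt_eq_fderiv ((hf.of_le (le_add_self.trans hmn)).differentiable one_ne_zero)]
  exact (hf.fderiv_right hmn).clm_apply contDiff_const

theorem pdx_pdt_comm (hf : ContDiff ℝ 2 (uncurry f)) : pdx (pdt f) = pdt (pdx f) := by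
  have hf₁ : Differentiable ℝ (uncurry f) := hf.differentiable two_ne_zero
  have hf₂ : Differentiable ℝ (fderiv ℝ (uncurry f)) :=
    (hf.fderiv_right (m := 1) one_add_one_eq_two.le).differentiable one_ne_zero
  have hx : Differentiable ℝ (uncurry (pdx f)) :=
    (contDiff_uncurry_pdx (m := 1) hf one_add_one_eq_two.le).differentiable one_ne_zero
  have ht : Differentiable ℝ (uncurry (pdt f)) :=
    (contDiff_uncurry_pdt (m := 1) hf one_add_one_eq_two.le).differentiable one_ne_zero
  apply uncurry_injective
  rw [uncurry_pdx_eq_fderiv ht, uncurry_pdt_eq_fderiv hx, uncurry_pdx_eq_fderiv hf₁,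
    uncurry_pdt_eq_fderiv hf₁]
  ext p
  have symm : IsSymmSndFDerivAt ℝ (uncurry f) p := hf.contDiffAt.isSymmSndFDerivAt (by simp)
  rw [fderiv_clm_apply (hf₂ p) (by fun_prop), fderiv_clm_apply (hf₂ p) (by fun_prop)]
  simpa using symm (1, 0) (0, 1)

theorem continuous_slice (hf : Continuous (uncurry f)) (x : ℝ) : Continuous (f x) :=
  hf.comp (by fun_prop : Continuous fun t : ℝ => (x, t))

theorem contDiff_uncurry_swap {n : WithTop ℕ∞} (hf : ContDiff ℝ n (uncurry f)) :
    ContDiff ℝ n (uncurry (swap f)) :=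
  hf.comp (by fun_prop : ContDiff ℝ n fun p : ℝ × ℝ => (p.2, p.1))

theorem deriv_eq_zero_of_eq_zero_on_Icc {g : ℝ → ℝ} {a b x : ℝ} (hg : DifferentiableAt ℝ g x)
    (hab : a < b) (hx : x ∈ Icc a b) (hzero : ∀ y ∈ Icc a b, g y = 0) : deriv g x = 0 := by
  rw [← hg.derivWithin (uniqueDiffOn_Icc hab x hx),
    derivWithin_congr (f := fun _ => (0 : ℝ)) hzero (hzero x hx), derivWithin_fun_const,
    Pi.zero_apply]

end PartialDerivatives

section EnergyInequalities

theorem hasDerivAt_integral_pdx {G : ℝ → ℝ → ℝ} (hG : ContDiff ℝ 1 (uncurry G)) (c d x : ℝ) :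
    HasDerivAt (fun y => ∫ t in c..d, G y t) (∫ t in c..d, pdx G x t) x := by
  have hGx : Continuous (uncurry (pdx G)) := (contDiff_uncurry_pdx hG le_rfl (m := 0)).continuous
  obtain ⟨K, hK⟩ := ((isCompact_Icc (a := x - 1) (b := x + 1)).prod
    (isCompact_uIcc (a := c) (b := d))).exists_bound_of_continuousOn hGx.continuousOn
  exact (intervalIntegral.hasDerivAt_integral_of_dominated_loc_of_deriv_le (bound := fun _ => K)
    (Icc_mem_nhds (sub_one_lt x) (lt_add_one x))
    (.of_forall fun y => (continuous_slice hG.continuous y).aestronglyMeasurable)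
    ((continuous_slice hG.continuous x).intervalIntegrable _ _)
    (continuous_slice hGx x).aestronglyMeasurable
    (.of_forall fun t ht y hy => hK (y, t) ⟨hy, uIoc_subset_uIcc ht⟩)
    intervalIntegrable_const
    (.of_forall fun t _ y _ => hasDerivAt_pdx (hG.differentiable one_ne_zero) y t)).2

theorem integral_le_mul_integral_of_le_add_deriv {g h F F' : ℝ → ℝ} {a b C : ℝ} (hab : a ≤ b)
    (hh : Continuous h) (hg : Continuous g) (hF : ∀ r, HasDerivAt F (F' r) r)
    (hF' : Continuous F') (hFa : F a = 0) (hFb : F b = 0)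
    (hle : ∀ r ∈ Icc a b, h r ≤ C * g r + F' r) :
    ∫ r in a..b, h r ≤ C * ∫ r in a..b, g r := by
  have flux_zero : ∫ r in a..b, F' r = 0 := by
    rw [intervalIntegral.integral_eq_sub_of_hasDerivAt (fun r _ => hF r)
      (hF'.intervalIntegrable _ _), hFa, hFb, sub_zero]
  calc ∫ r in a..b, h r
      ≤ ∫ r in a..b, (C * g r + F' r) :=
        intervalIntegral.integral_mono_on hab (hh.intervalIntegrable _ _)
          (((hg.const_mul C).add hF').intervalIntegrable _ _) hle
    _ = C * ∫ r in a..b, g r := by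
        rw [intervalIntegral.integral_add ((hg.const_mul C).intervalIntegrable _ _)
          (hF'.intervalIntegrable _ _), intervalIntegral.integral_const_mul, flux_zero, add_zero]

theorem abs_integral_le_mul_integral_of_abs_sub_deriv_le {g h F F' : ℝ → ℝ} {a b C : ℝ}
    (hab : a ≤ b) (hh : Continuous h) (hg : Continuous g) (hF : ∀ r, HasDerivAt F (F' r) r)
    (hF' : Continuous F') (hFa : F a = 0) (hFb : F b = 0)
    (hle : ∀ r ∈ Icc a b, |h r - F' r| ≤ C * g r) :
    |∫ r in a..b, h r| ≤ C * ∫ r in a..b, g r := by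
  have upper : ∫ r in a..b, h r ≤ C * ∫ r in a..b, g r :=
    integral_le_mul_integral_of_le_add_deriv hab hh hg hF hF' hFa hFb fun r hr => by
      linarith [(abs_le.1 (hle r hr)).2]
  have lower : ∫ r in a..b, -h r ≤ C * ∫ r in a..b, g r :=
    integral_le_mul_integral_of_le_add_deriv (F := fun r => -F r) hab hh.neg hg
      (fun r => (hF r).neg) hF'.neg (by simpa using hFa) (by simpa using hFb) fun r hr => by
        linarith [(abs_le.1 (hle r hr)).1]
  rw [intervalIntegral.integral_neg] at lower
  exact abs_le'.2 ⟨upper, lower⟩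

theorem eq_zero_of_integral_nonpos {g : ℝ → ℝ} {a b : ℝ} (hab : a < b)
    (hg : ContinuousOn g (Icc a b)) (hnonneg : ∀ r ∈ Icc a b, 0 ≤ g r)
    (hint : ∫ r in a..b, g r ≤ 0) {r : ℝ} (hr : r ∈ Icc a b) : g r = 0 := by
  by_contra hne
  exact hint.not_gt <| intervalIntegral.integral_pos hab hg
    (fun s hs => hnonneg s (Ioc_subset_Icc_self hs)) ⟨r, hr, (hnonneg r hr).lt_of_ne' hne⟩

theorem nonpos_of_deriv_le_mul_self {E E' : ℝ → ℝ} {a b C : ℝ}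
    (hE : ∀ x ∈ Icc a b, HasDerivAt E (E' x) x) (hle : ∀ x ∈ Icc a b, E' x ≤ C * E x)
    (ha : E a ≤ 0) {x : ℝ} (hx : x ∈ Icc a b) : E x ≤ 0 := by
  refine (le_gronwallBound_of_liminf_deriv_right_le
    (fun y hy => (hE y hy).continuousAt.continuousWithinAt) (fun y hy r hr =>
      (hE y (Ico_subset_Icc_self hy)).hasDerivWithinAt.liminf_right_slope_le hr) ha
    (fun y hy => ?_) x hx).trans_eq (gronwallBound_ε0_δ0 C _)
  simpa using hle y (Ico_subset_Icc_self hy)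

theorem eq_zero_of_abs_deriv_le_mul_abs_self_of_mem_Icc {E : Type*} [NormedAddCommGroup E]
    [NormedSpace ℝ E] {g g' : ℝ → E} {a b C t₀ : ℝ} (ht₀ : t₀ ∈ Icc a b)
    (hg : ∀ t ∈ Icc a b, HasDerivAt g (g' t) t) (hle : ∀ t ∈ Icc a b, ‖g' t‖ ≤ C * ‖g t‖)
    (hzero : g t₀ = 0) {t : ℝ} (ht : t ∈ Icc a b) : g t = 0 := by
  rcases le_total t₀ t with hlt | hlt
  · have mem : ∀ s ∈ Icc t₀ b, s ∈ Icc a b := fun s hs => ⟨ht₀.1.trans hs.1, hs.2⟩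
    exact eq_zero_of_abs_deriv_le_mul_abs_self_of_eq_zero_right
      (fun s hs => (hg s (mem s hs)).continuousAt.continuousWithinAt)
      (fun s hs => (hg s (mem s (Ico_subset_Icc_self hs))).hasDerivWithinAt) hzero
      (fun s hs => hle s (mem s (Ico_subset_Icc_self hs))) t ⟨hlt, ht.2⟩
  · have mem : ∀ s ∈ Icc (-t₀) (-a), -s ∈ Icc a b := fun s hs =>
      ⟨by linarith [hs.2], by linarith [hs.1, ht₀.2]⟩
    have hderiv : ∀ s ∈ Icc (-t₀) (-a), HasDerivAt (fun r => g (-r)) (-g' (-s)) s := fun s hs => by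
      simpa [comp_def] using (hg (-s) (mem s hs)).scomp s (hasDerivAt_neg s)
    simpa using eq_zero_of_abs_deriv_le_mul_abs_self_of_eq_zero_right (K := C)
      (fun s hs => (hderiv s hs).continuousAt.continuousWithinAt)
      (fun s hs => (hderiv s (Ico_subset_Icc_self hs)).hasDerivWithinAt) (by simpa using hzero)
      (fun s hs => by simpa using hle (-s) (mem s (Ico_subset_Icc_self hs)))
      (-t) ⟨neg_le_neg hlt, neg_le_neg ht.1⟩

theorem eq_zero_of_abs_pdt_sub_pdx_le {e F : ℝ → ℝ → ℝ} {a b t₀ t₁ τ C : ℝ} (hab : a < b)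
    (he : ContDiff ℝ 1 (uncurry e)) (hF : ContDiff ℝ 1 (uncurry F))
    (hnonneg : ∀ x ∈ Icc a b, ∀ t ∈ Icc t₀ t₁, 0 ≤ e x t)
    (hle : ∀ x ∈ Icc a b, ∀ t ∈ Icc t₀ t₁, |pdt e x t - pdx F x t| ≤ C * e x t)
    (hFa : ∀ t ∈ Icc t₀ t₁, F a t = 0) (hFb : ∀ t ∈ Icc t₀ t₁, F b t = 0)
    (hτ : τ ∈ Icc t₀ t₁) (hinit : ∀ x ∈ Icc a b, e x τ = 0)
    {x t : ℝ} (hx : x ∈ Icc a b) (ht : t ∈ Icc t₀ t₁) : e x t = 0 := by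
  have he' := contDiff_uncurry_swap he
  have cont_e (s : ℝ) : Continuous fun y => e y s := continuous_slice he'.continuous s
  have cont_et (s : ℝ) : Continuous fun y => pdt e y s :=
    continuous_slice (contDiff_uncurry_pdx (m := 0) he' le_rfl).continuous s
  have cont_Fx (s : ℝ) : Continuous fun y => pdx F y s :=
    continuous_slice (contDiff_uncurry_swap
      (contDiff_uncurry_pdx (m := 0) hF le_rfl)).continuous s
  have rate : ∀ s ∈ Icc t₀ t₁,
      ‖∫ y in a..b, pdt e y s‖ ≤ C * ‖∫ y in a..b, e y s‖ := fun s hs => by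
    rw [Real.norm_of_nonneg
      (intervalIntegral.integral_nonneg hab.le fun y hy => hnonneg y hy s hs)]
    exact abs_integral_le_mul_integral_of_abs_sub_deriv_le hab.le (cont_et s) (cont_e s)
      (fun y => hasDerivAt_pdx (hF.differentiable one_ne_zero) y s) (cont_Fx s) (hFa s hs)
      (hFb s hs) fun y hy => hle y hy s hs
  have initial_zero : ∫ y in a..b, e y τ = 0 := by
    rw [intervalIntegral.integral_congr (g := fun _ => 0) fun y hy =>
      hinit y (uIcc_of_le hab.le ▸ hy), intervalIntegral.integral_zero]
  have energy_zero : ∫ y in a..b, e y t = 0 :=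
    eq_zero_of_abs_deriv_le_mul_abs_self_of_mem_Icc hτ
      (fun s _ => hasDerivAt_integral_pdx he' a b s) rate initial_zero ht
  exact eq_zero_of_integral_nonpos hab (cont_e t).continuousOn (fun y hy => hnonneg y hy t ht)
    energy_zero.le hx

end EnergyInequalities

section DomainOfDependence

/-- A smooth weight whose support is the triangle of dependence
`c * (x - a) ≤ min (t - t₀) (t₁ - t)` based on the segment `{a} × [t₀, t₁]`, where `c` is the
slowness (inverse speed) of propagation. -/
noncomputable def triangleWeight (c a t₀ t₁ : ℝ) : ℝ → ℝ → ℝ := fun x t =>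
  expNegInvGlue (t - t₀ - c * (x - a)) * expNegInvGlue (t₁ - t - c * (x - a))

variable {c a t₀ t₁ x t : ℝ}

theorem contDiff_triangleWeight {n : ℕ∞} : ContDiff ℝ n (uncurry (triangleWeight c a t₀ t₁)) := by
  have left : ContDiff ℝ n fun p : ℝ × ℝ => p.2 - t₀ - c * (p.1 - a) := by fun_prop
  have right : ContDiff ℝ n fun p : ℝ × ℝ => t₁ - p.2 - c * (p.1 - a) := by fun_prop
  exact (expNegInvGlue.contDiff.comp left).mul (expNegInvGlue.contDiff.comp right)

theorem triangleWeight_nonneg : 0 ≤ triangleWeight c a t₀ t₁ x t :=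
  mul_nonneg (expNegInvGlue.nonneg _) (expNegInvGlue.nonneg _)

theorem triangleWeight_pos (hl : c * (x - a) < t - t₀) (hr : c * (x - a) < t₁ - t) :
    0 < triangleWeight c a t₀ t₁ x t :=
  mul_pos (expNegInvGlue.pos_of_pos (sub_pos.2 hl)) (expNegInvGlue.pos_of_pos (sub_pos.2 hr))

theorem triangleWeight_left (hc : 0 ≤ c) (hx : a ≤ x) : triangleWeight c a t₀ t₁ x t₀ = 0 := by
  have : 0 ≤ c * (x - a) := mul_nonneg hc (sub_nonneg.2 hx)
  rw [triangleWeight, expNegInvGlue.zero_of_nonpos (by linarith), zero_mul]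

theorem triangleWeight_right (hc : 0 ≤ c) (hx : a ≤ x) : triangleWeight c a t₀ t₁ x t₁ = 0 := by
  have : 0 ≤ c * (x - a) := mul_nonneg hc (sub_nonneg.2 hx)
  rw [triangleWeight, mul_comm, expNegInvGlue.zero_of_nonpos (by linarith), zero_mul]

-- Both sides of the triangle have slope `± 1 / c`, which is the fastest the energy can travel.
theorem mul_abs_pdt_triangleWeight_le (hc : 0 ≤ c) :
    c * |pdt (triangleWeight c a t₀ t₁) x t| ≤ -pdx (triangleWeight c a t₀ t₁) x t := by
  set η := expNegInvGlue
  have hη {g : ℝ → ℝ} {g' s : ℝ} (hg : HasDerivAt g g' s) :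
      HasDerivAt (fun y => η (g y)) (deriv η (g s) * g') s :=
    ((expNegInvGlue.contDiff (n := 1)).differentiable (by simp) (g s)).hasDerivAt.comp s hg
  set l := t - t₀ - c * (x - a)
  set r := t₁ - t - c * (x - a)
  have slope_x (k : ℝ) : HasDerivAt (fun y => k - c * (y - a)) (-c) x := by
    simpa using (((hasDerivAt_id x).sub_const a).const_mul c).const_sub k
  have slope_tl : HasDerivAt (fun s => s - t₀ - c * (x - a)) 1 t :=
    ((hasDerivAt_id t).sub_const t₀).sub_const _
  have slope_tr : HasDerivAt (fun s => t₁ - s - c * (x - a)) (-1) t :=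
    ((hasDerivAt_id t).const_sub t₁).sub_const _
  have hx : pdx (triangleWeight c a t₀ t₁) x t
      = deriv η l * -c * η r + η l * (deriv η r * -c) :=
    ((hη (slope_x (t - t₀))).mul (hη (slope_x (t₁ - t)))).deriv
  have ht : pdt (triangleWeight c a t₀ t₁) x t
      = deriv η l * 1 * η r + η l * (deriv η r * -1) :=
    ((hη slope_tl).mul (hη slope_tr)).deriv
  have left_nonneg : 0 ≤ deriv η l * η r :=
    mul_nonneg expNegInvGlue.monotone.deriv_nonneg (expNegInvGlue.nonneg r)
  have right_nonneg : 0 ≤ η l * deriv η r :=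
    mul_nonneg (expNegInvGlue.nonneg l) expNegInvGlue.monotone.deriv_nonneg
  calc c * |pdt (triangleWeight c a t₀ t₁) x t|
      ≤ c * (deriv η l * η r + η l * deriv η r) := by
        rw [ht]
        exact mul_le_mul_of_nonneg_left (abs_le.2 ⟨by linarith, by linarith⟩) hc
    _ = -pdx (triangleWeight c a t₀ t₁) x t := by rw [hx]; ring

theorem pdx_triangleWeight_mul_le {e f : ℝ → ℝ → ℝ} {C : ℝ} (hc : 0 ≤ c)
    (he : Differentiable ℝ (uncurry e)) (hf : Differentiable ℝ (uncurry f)) (hnonneg : 0 ≤ e x t)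
    (hle : pdx e x t ≤ C * e x t + pdt f x t) (hfe : |f x t| ≤ c * e x t) :
    pdx (fun y s => triangleWeight c a t₀ t₁ y s * e y s) x t
      ≤ C * (triangleWeight c a t₀ t₁ x t * e x t)
        + pdt (fun y s => triangleWeight c a t₀ t₁ y s * f y s) x t := by
  set φ := triangleWeight c a t₀ t₁
  have hφ : Differentiable ℝ (uncurry φ) :=
    (contDiff_triangleWeight (n := 1)).differentiable one_ne_zero
  have weighted_pdx :
      pdx (fun y s => φ y s * e y s) x t = pdx φ x t * e x t + φ x t * pdx e x t :=
    ((hasDerivAt_pdx hφ x t).mul (hasDerivAt_pdx he x t)).deriv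
  have weighted_pdt :
      pdt (fun y s => φ y s * f y s) x t = pdt φ x t * f x t + φ x t * pdt f x t :=
    ((hasDerivAt_pdt hφ x t).mul (hasDerivAt_pdt hf x t)).deriv
  have lateral_loss : -(pdt φ x t * f x t) ≤ -pdx φ x t * e x t := by
    calc -(pdt φ x t * f x t) ≤ |pdt φ x t| * |f x t| := abs_mul (pdt φ x t) _ ▸ neg_le_abs _
      _ ≤ |pdt φ x t| * (c * e x t) := by gcongr
      _ = c * |pdt φ x t| * e x t := by ring
      _ ≤ -pdx φ x t * e x t :=
        mul_le_mul_of_nonneg_right (mul_abs_pdt_triangleWeight_le hc) hnonneg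
  rw [weighted_pdx, weighted_pdt]
  linarith [mul_le_mul_of_nonneg_left hle (triangleWeight_nonneg : 0 ≤ φ x t)]

theorem eq_zero_on_triangle_of_pdx_le {e f : ℝ → ℝ → ℝ} {b C : ℝ} (hc : 0 ≤ c)
    (he : ContDiff ℝ 1 (uncurry e)) (hf : ContDiff ℝ 1 (uncurry f))
    (hnonneg : ∀ x ∈ Icc a b, ∀ t ∈ Icc t₀ t₁, 0 ≤ e x t)
    (hle : ∀ x ∈ Icc a b, ∀ t ∈ Icc t₀ t₁, pdx e x t ≤ C * e x t + pdt f x t)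
    (hfe : ∀ x ∈ Icc a b, ∀ t ∈ Icc t₀ t₁, |f x t| ≤ c * e x t)
    (hinit : ∀ t ∈ Icc t₀ t₁, e a t = 0) (hx : x ∈ Icc a b)
    (hl : c * (x - a) < t - t₀) (hr : c * (x - a) < t₁ - t) : e x t = 0 := by
  have hxa : 0 ≤ c * (x - a) := mul_nonneg hc (sub_nonneg.2 hx.1)
  have ht : t ∈ Icc t₀ t₁ := ⟨by linarith, by linarith⟩
  have ht₀₁ : t₀ < t₁ := by linarith
  set φ := triangleWeight c a t₀ t₁
  have hφ : ContDiff ℝ 1 (uncurry φ) := contDiff_triangleWeight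
  have hφe : ContDiff ℝ 1 (uncurry fun y s => φ y s * e y s) := hφ.mul he
  have hφf : ContDiff ℝ 1 (uncurry fun y s => φ y s * f y s) := hφ.mul hf
  have rate : ∀ y ∈ Icc a b, ∫ s in t₀..t₁, pdx (fun y s => φ y s * e y s) y s
      ≤ C * ∫ s in t₀..t₁, φ y s * e y s := fun y hy =>
    integral_le_mul_integral_of_le_add_deriv ht₀₁.le
      (continuous_slice (contDiff_uncurry_pdx (m := 0) hφe le_rfl).continuous y)
      (continuous_slice hφe.continuous y)
      (hasDerivAt_pdt (hφf.differentiable one_ne_zero) y)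
      (continuous_slice (contDiff_uncurry_pdt (m := 0) hφf le_rfl).continuous y)
      (by simp [φ, triangleWeight_left hc hy.1]) (by simp [φ, triangleWeight_right hc hy.1])
      fun s hs => pdx_triangleWeight_mul_le hc (he.differentiable one_ne_zero)
        (hf.differentiable one_ne_zero) (hnonneg y hy s hs) (hle y hy s hs) (hfe y hy s hs)
  have initial_zero : ∫ s in t₀..t₁, φ a s * e a s ≤ 0 := by
    rw [intervalIntegral.integral_congr (g := fun _ => 0) fun s hs => by
      simp [hinit s (uIcc_of_le ht₀₁.le ▸ hs)], intervalIntegral.integral_zero]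
  have energy_nonpos : ∫ s in t₀..t₁, φ x s * e x s ≤ 0 :=
    nonpos_of_deriv_le_mul_self (fun y _ => hasDerivAt_integral_pdx hφe t₀ t₁ y) rate initial_zero hx
  have weighted_zero : φ x t * e x t = 0 :=
    eq_zero_of_integral_nonpos ht₀₁ (continuous_slice hφe.continuous x).continuousOn
      (fun s hs => mul_nonneg triangleWeight_nonneg (hnonneg x hx s hs)) energy_nonpos ht
  exact (mul_eq_zero.1 weighted_zero).resolve_left (triangleWeight_pos hl hr).ne'

end DomainOfDependence

section JointlySmooth

/-- Joint smoothness of a function of space and time, in the curried form in which `pdx` and `pdt`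
act. -/
def JointlySmooth (f : ℝ → ℝ → ℝ) : Prop := ContDiff ℝ ∞ (uncurry f)

namespace JointlySmooth

variable {f : ℝ → ℝ → ℝ}

theorem contDiff_one (hf : JointlySmooth f) : ContDiff ℝ 1 (uncurry f) :=
  hf.of_le ENat.LEInfty.out

theorem differentiable (hf : JointlySmooth f) : Differentiable ℝ (uncurry f) :=
  hf.contDiff_one.differentiable one_ne_zero

theorem dx (hf : JointlySmooth f) : JointlySmooth (pdx f) :=
  contDiff_uncurry_pdx hf (by simp)

theorem dt (hf : JointlySmooth f) : JointlySmooth (pdt f) :=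
  contDiff_uncurry_pdt hf (by simp)

theorem comm (hf : JointlySmooth f) : pdx (pdt f) = pdt (pdx f) :=
  pdx_pdt_comm (hf.of_le ENat.LEInfty.out)

theorem hasDerivAt_dx (hf : JointlySmooth f) (x t : ℝ) :
    HasDerivAt (fun y => f y t) (pdx f x t) x :=
  hasDerivAt_pdx hf.differentiable x t

theorem hasDerivAt_dt (hf : JointlySmooth f) (x t : ℝ) :
    HasDerivAt (fun s => f x s) (pdt f x t) t :=
  hasDerivAt_pdt hf.differentiable x t

theorem pdt_eq_zero_of_eq_zero_on_Icc (hf : JointlySmooth f) {a t₀ t₁ : ℝ} (ht₀₁ : t₀ < t₁)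
    (hzero : ∀ t ∈ Icc t₀ t₁, f a t = 0) : ∀ t ∈ Icc t₀ t₁, pdt f a t = 0 := fun t ht =>
  deriv_eq_zero_of_eq_zero_on_Icc (hf.hasDerivAt_dt a t).differentiableAt ht₀₁ ht hzero

theorem pdx_eq_zero_of_eq_zero_on_Icc (hf : JointlySmooth f) {a b t : ℝ} (hab : a < b)
    (hzero : ∀ x ∈ Icc a b, f x t = 0) : ∀ x ∈ Icc a b, pdx f x t = 0 := fun x hx =>
  deriv_eq_zero_of_eq_zero_on_Icc (hf.hasDerivAt_dx x t).differentiableAt hab hx hzero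

end JointlySmooth

end JointlySmooth

section BigO

variable {α : Type*} {s : Set α} {f g e : α → ℝ}

theorem isBigO_sqrt_of_mul_sq_le {k : ℝ} (hk : 0 < k) (hle : ∀ p ∈ s, k * f p ^ 2 ≤ e p) :
    f =O[𝓟 s] fun p => √(e p) := by
  refine isBigO_principal.2 ⟨√k⁻¹, fun p hp => ?_⟩
  rw [Real.norm_eq_abs, Real.norm_of_nonneg (Real.sqrt_nonneg _),
    ← Real.sqrt_mul (inv_pos.2 hk).le]
  exact Real.abs_le_sqrt ((le_inv_mul_iff₀ hk).2 (hle p hp))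

theorem mul_isBigO_of_isBigO_sqrt (he : ∀ p ∈ s, 0 ≤ e p) (hf : f =O[𝓟 s] fun p => √(e p))
    (hg : g =O[𝓟 s] fun p => √(e p)) : (fun p => f p * g p) =O[𝓟 s] e :=
  (hf.mul hg).congr' .rfl (eventually_principal.2 fun p hp => Real.mul_self_sqrt (he p hp))

theorem exists_forall_abs_le_mul_of_isBigO {β : Type*} {A : Set α} {B : Set β} {f e : α → β → ℝ}
    (he : ∀ x ∈ A, ∀ t ∈ B, 0 ≤ e x t) (hf : uncurry f =O[𝓟 (A ×ˢ B)] uncurry e) :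
    ∃ C : ℝ, ∀ x ∈ A, ∀ t ∈ B, |f x t| ≤ C * e x t := by
  obtain ⟨C, hC⟩ := isBigO_principal.1 hf
  exact ⟨C, fun x hx t ht => Real.norm_of_nonneg (he x hx t ht) ▸ hC (x, t) ⟨hx, ht⟩⟩

theorem continuous_mul_isBigO_of_isCompact {E : Type*} [NormedAddCommGroup E]
    [TopologicalSpace α] (hs : IsCompact s) {N : α → E} (hf : Continuous f)
    (hg : g =O[𝓟 s] N) : (fun p => f p * g p) =O[𝓟 s] N := by
  have bounded : f =O[𝓟 s] fun _ => (1 : ℝ) :=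
    hf.continuousOn.isBigO_principal hs (by norm_num)
  simpa using (bounded.mul hg.norm_right).norm_right

end BigO

section WaveOperator

/-- The one-dimensional wave operator with tension `lam` and density `μ`. -/
noncomputable def waveOp (lam μ : ℝ) (y : ℝ → ℝ → ℝ) : ℝ → ℝ → ℝ := fun x t =>
  lam * pdx (pdx y) x t - μ * pdt (pdt y) x t

/-- The energy density of `waveOp lam μ`; it serves both as the usual energy in time and, with
the roles of space and time exchanged, as the energy propagated in `x`. -/
noncomputable def waveEnergy (lam μ : ℝ) (y : ℝ → ℝ → ℝ) : ℝ → ℝ → ℝ := fun x t =>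
  (lam * pdx y x t ^ 2 + μ * pdt y x t ^ 2) / 2

/-- The flux of `waveEnergy`: with `k = lam` it is the spatial flux of the energy in time, with
`k = μ` the temporal flux of the energy in space. -/
noncomputable def waveFlux (k : ℝ) (y : ℝ → ℝ → ℝ) : ℝ → ℝ → ℝ := fun x t =>
  k * (pdx y x t * pdt y x t)

variable {lam μ k : ℝ} {y : ℝ → ℝ → ℝ}

theorem jointlySmooth_waveOp (hy : JointlySmooth y) : JointlySmooth (waveOp lam μ y) :=
  (contDiff_const.mul hy.dx.dx).sub (contDiff_const.mul hy.dt.dt)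

theorem jointlySmooth_waveEnergy (hy : JointlySmooth y) : JointlySmooth (waveEnergy lam μ y) :=
  ((contDiff_const.mul (hy.dx.pow 2)).add (contDiff_const.mul (hy.dt.pow 2))).div_const 2

theorem jointlySmooth_waveFlux (hy : JointlySmooth y) : JointlySmooth (waveFlux k y) :=
  contDiff_const.mul (hy.dx.mul hy.dt)

theorem waveEnergy_nonneg (hlam : 0 ≤ lam) (hμ : 0 ≤ μ) (x t : ℝ) :
    0 ≤ waveEnergy lam μ y x t := by
  unfold waveEnergy
  positivity

theorem pdx_waveOp (hy : JointlySmooth y) : pdx (waveOp lam μ y) = waveOp lam μ (pdx y) := by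
  have htt : pdx (pdt (pdt y)) = pdt (pdt (pdx y)) := by rw [hy.dt.comm, hy.comm]
  ext x t
  rw [waveOp, ← htt]
  exact (((hy.dx.dx.hasDerivAt_dx x t).const_mul lam).sub
    ((hy.dt.dt.hasDerivAt_dx x t).const_mul μ)).deriv

theorem pdx_waveEnergy (hy : JointlySmooth y) (x t : ℝ) :
    pdx (waveEnergy lam μ y) x t
      = pdt (waveFlux μ y) x t + pdx y x t * waveOp lam μ y x t := by
  have energy_x : pdx (waveEnergy lam μ y) x t = _ :=
    ((((hy.dx.hasDerivAt_dx x t).pow 2).const_mul lam).add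
      (((hy.dt.hasDerivAt_dx x t).pow 2).const_mul μ) |>.div_const 2).deriv
  have flux_t : pdt (waveFlux μ y) x t = _ :=
    (((hy.dx.hasDerivAt_dt x t).mul (hy.dt.hasDerivAt_dt x t)).const_mul μ).deriv
  rw [energy_x, flux_t, hy.comm, waveOp]
  ring

theorem pdt_waveEnergy (hy : JointlySmooth y) (x t : ℝ) :
    pdt (waveEnergy lam μ y) x t
      = pdx (waveFlux lam y) x t - pdt y x t * waveOp lam μ y x t := by
  have energy_t : pdt (waveEnergy lam μ y) x t = _ :=
    ((((hy.dx.hasDerivAt_dt x t).pow 2).const_mul lam).add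
      (((hy.dt.hasDerivAt_dt x t).pow 2).const_mul μ) |>.div_const 2).deriv
  have flux_x : pdx (waveFlux lam y) x t = _ :=
    (((hy.dx.hasDerivAt_dx x t).mul (hy.dt.hasDerivAt_dx x t)).const_mul lam).deriv
  rw [energy_t, flux_x, hy.comm, waveOp]
  ring

theorem abs_waveFlux_le_mul_waveEnergy {c : ℝ} (hc : 0 < c) (hμ : 0 ≤ μ) (hμc : μ ≤ c ^ 2 * lam)
    (x t : ℝ) : |waveFlux μ y x t| ≤ c * waveEnergy lam μ y x t := by
  set X := |pdx y x t| with hX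
  set Y := |pdt y x t| with hY
  have young : c * (2 * (X * Y)) ≤ X ^ 2 + c ^ 2 * Y ^ 2 := by
    linarith [sq_nonneg (X - c * Y), sub_sq X (c * Y)]
  have scaled : c * (μ * (X * Y)) ≤ c * (c * ((lam * X ^ 2 + μ * Y ^ 2) / 2)) := by
    linarith [mul_le_mul_of_nonneg_left young hμ, mul_le_mul_of_nonneg_right hμc (sq_nonneg X)]
  rw [waveFlux, waveEnergy, abs_mul, abs_mul, abs_of_nonneg hμ, ← sq_abs (pdx y x t),
    ← sq_abs (pdt y x t), ← hX, ← hY]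
  exact le_of_mul_le_mul_left scaled hc

end WaveOperator

section LateralCauchyProblem

variable {ι κ : Type*} [Fintype ι] [Fintype κ] {lam μ : ι → ℝ} {y : ι → ℝ → ℝ → ℝ}
  {g : κ → ℝ → ℝ → ℝ} {c a b t₀ t₁ : ℝ}

/-- The energy density of a system coupling the waves `y i` with scalar fields `g k` that satisfy
first-order equations. -/
noncomputable def waveSystemEnergy (lam μ : ι → ℝ) (y : ι → ℝ → ℝ → ℝ) (g : κ → ℝ → ℝ → ℝ) :
    ℝ → ℝ → ℝ := fun x t =>
  ∑ i, waveEnergy (lam i) (μ i) (y i) x t + ∑ k, g k x t ^ 2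

theorem jointlySmooth_waveSystemEnergy (hy : ∀ i, JointlySmooth (y i))
    (hg : ∀ k, JointlySmooth (g k)) : JointlySmooth (waveSystemEnergy lam μ y g) :=
  (ContDiff.sum fun i _ => jointlySmooth_waveEnergy (hy i)).add
    (ContDiff.sum fun k _ => (hg k).pow 2)

theorem waveEnergy_le_waveSystemEnergy (hlam : ∀ i, 0 ≤ lam i) (hμ : ∀ i, 0 ≤ μ i) (i : ι)
    (x t : ℝ) : waveEnergy (lam i) (μ i) (y i) x t ≤ waveSystemEnergy lam μ y g x t :=
  (Finset.single_le_sum (f := fun j => waveEnergy (lam j) (μ j) (y j) x t)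
    (fun j _ => waveEnergy_nonneg (hlam j) (hμ j) x t) (Finset.mem_univ i)).trans
    (le_add_of_nonneg_right (Finset.sum_nonneg fun k _ => sq_nonneg (g k x t)))

theorem sq_le_waveSystemEnergy (hlam : ∀ i, 0 ≤ lam i) (hμ : ∀ i, 0 ≤ μ i) (k : κ) (x t : ℝ) :
    g k x t ^ 2 ≤ waveSystemEnergy lam μ y g x t :=
  (Finset.single_le_sum (f := fun j => g j x t ^ 2) (fun _ _ => sq_nonneg _)
    (Finset.mem_univ k)).trans
    (le_add_of_nonneg_left (Finset.sum_nonneg fun i _ => waveEnergy_nonneg (hlam i) (hμ i) x t))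

theorem waveSystemEnergy_nonneg (hlam : ∀ i, 0 ≤ lam i) (hμ : ∀ i, 0 ≤ μ i) (x t : ℝ) :
    0 ≤ waveSystemEnergy lam μ y g x t :=
  add_nonneg (Finset.sum_nonneg fun i _ => waveEnergy_nonneg (hlam i) (hμ i) x t)
    (Finset.sum_nonneg fun k _ => sq_nonneg (g k x t))

theorem pdx_isBigO_sqrt_waveSystemEnergy (hlam : ∀ i, 0 < lam i) (hμ : ∀ i, 0 ≤ μ i) (i : ι)
    (s : Set (ℝ × ℝ)) :
    uncurry (pdx (y i)) =O[𝓟 s] fun p => √(uncurry (waveSystemEnergy lam μ y g) p) := by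
  refine isBigO_sqrt_of_mul_sq_le (half_pos (hlam i)) fun p _ =>
    le_trans ?_ (waveEnergy_le_waveSystemEnergy (fun j => (hlam j).le) hμ i p.1 p.2)
  have : 0 ≤ μ i * pdt (y i) p.1 p.2 ^ 2 := mul_nonneg (hμ i) (sq_nonneg _)
  simp only [uncurry, waveEnergy]
  linarith

theorem pdt_isBigO_sqrt_waveSystemEnergy (hlam : ∀ i, 0 ≤ lam i) (hμ : ∀ i, 0 < μ i) (i : ι)
    (s : Set (ℝ × ℝ)) :
    uncurry (pdt (y i)) =O[𝓟 s] fun p => √(uncurry (waveSystemEnergy lam μ y g) p) := by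
  refine isBigO_sqrt_of_mul_sq_le (half_pos (hμ i)) fun p _ =>
    le_trans ?_ (waveEnergy_le_waveSystemEnergy hlam (fun j => (hμ j).le) i p.1 p.2)
  have : 0 ≤ lam i * pdx (y i) p.1 p.2 ^ 2 := mul_nonneg (hlam i) (sq_nonneg _)
  simp only [uncurry, waveEnergy]
  linarith

theorem isBigO_sqrt_waveSystemEnergy (hlam : ∀ i, 0 ≤ lam i) (hμ : ∀ i, 0 ≤ μ i) (k : κ)
    (s : Set (ℝ × ℝ)) :
    uncurry (g k) =O[𝓟 s] fun p => √(uncurry (waveSystemEnergy lam μ y g) p) :=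
  isBigO_sqrt_of_mul_sq_le one_pos fun p _ =>
    (one_mul _).trans_le (sq_le_waveSystemEnergy hlam hμ k p.1 p.2)

/-- The part of `pdx (waveSystemEnergy lam μ y g)` which is not a time derivative. -/
noncomputable def lateralSource (lam μ : ι → ℝ) (y : ι → ℝ → ℝ → ℝ) (g : κ → ℝ → ℝ → ℝ) :
    ℝ → ℝ → ℝ := fun x t =>
  ∑ i, pdx (y i) x t * waveOp (lam i) (μ i) (y i) x t + 2 * ∑ k, g k x t * pdx (g k) x t

theorem pdx_waveSystemEnergy (hy : ∀ i, JointlySmooth (y i)) (hg : ∀ k, JointlySmooth (g k))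
    (x t : ℝ) :
    pdx (waveSystemEnergy lam μ y g) x t
      = pdt (fun x t => ∑ i, waveFlux (μ i) (y i) x t) x t + lateralSource lam μ y g x t := by
  have energy_x : pdx (waveSystemEnergy lam μ y g) x t = _ :=
    ((HasDerivAt.fun_sum fun i _ => (jointlySmooth_waveEnergy (hy i)).hasDerivAt_dx x t).add
      (HasDerivAt.fun_sum fun k _ => ((hg k).hasDerivAt_dx x t).pow 2)).deriv
  have flux_t : pdt (fun x t => ∑ i, waveFlux (μ i) (y i) x t) x t = _ :=
    (HasDerivAt.fun_sum fun i _ => (jointlySmooth_waveFlux (hy i)).hasDerivAt_dt x t).deriv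
  rw [energy_x, flux_t, lateralSource, Finset.sum_congr rfl fun i _ => pdx_waveEnergy (hy i) x t,
    Finset.sum_add_distrib, Finset.mul_sum, add_assoc]
  congr! 3
  push_cast
  ring

theorem lateralSource_isBigO_waveSystemEnergy {s : Set (ℝ × ℝ)} (hlam : ∀ i, 0 < lam i)
    (hμ : ∀ i, 0 ≤ μ i)
    (hwave : ∀ i, uncurry (waveOp (lam i) (μ i) (y i)) =O[𝓟 s]
      fun p => √(uncurry (waveSystemEnergy lam μ y g) p))
    (htransport : ∀ k, uncurry (pdx (g k)) =O[𝓟 s]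
      fun p => √(uncurry (waveSystemEnergy lam μ y g) p)) :
    uncurry (lateralSource lam μ y g) =O[𝓟 s] uncurry (waveSystemEnergy lam μ y g) := by
  have nonneg : ∀ p ∈ s, 0 ≤ uncurry (waveSystemEnergy lam μ y g) p := fun p _ =>
    waveSystemEnergy_nonneg (fun i => (hlam i).le) hμ p.1 p.2
  have waves := IsBigO.fun_sum (s := Finset.univ) fun i _ => mul_isBigO_of_isBigO_sqrt nonneg
    (pdx_isBigO_sqrt_waveSystemEnergy hlam hμ i s) (hwave i)
  have transports := IsBigO.fun_sum (s := Finset.univ) fun k _ => mul_isBigO_of_isBigO_sqrt nonneg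
    (isBigO_sqrt_waveSystemEnergy (fun i => (hlam i).le) hμ k s) (htransport k)
  exact waves.add (transports.const_mul_left 2)

theorem abs_sum_waveFlux_le_mul_waveSystemEnergy (hc : 0 < c) (hμ : ∀ i, 0 ≤ μ i)
    (hspeed : ∀ i, μ i ≤ c ^ 2 * lam i) (x t : ℝ) :
    |∑ i, waveFlux (μ i) (y i) x t| ≤ c * waveSystemEnergy lam μ y g x t :=
  calc |∑ i, waveFlux (μ i) (y i) x t|
      ≤ ∑ i, c * waveEnergy (lam i) (μ i) (y i) x t :=
        (Finset.abs_sum_le_sum_abs _ _).trans <| Finset.sum_le_sum fun i _ =>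
          abs_waveFlux_le_mul_waveEnergy hc (hμ i) (hspeed i) x t
    _ = c * ∑ i, waveEnergy (lam i) (μ i) (y i) x t := (Finset.mul_sum ..).symm
    _ ≤ c * waveSystemEnergy lam μ y g x t := mul_le_mul_of_nonneg_left
        (le_add_of_nonneg_right (Finset.sum_nonneg fun k _ => sq_nonneg (g k x t))) hc.le

theorem waveSystemEnergy_eq_zero_on_triangle (hc : 0 < c) (hlam : ∀ i, 0 < lam i)
    (hμ : ∀ i, 0 ≤ μ i) (hspeed : ∀ i, μ i ≤ c ^ 2 * lam i)
    (hy : ∀ i, JointlySmooth (y i)) (hg : ∀ k, JointlySmooth (g k))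
    (hwave : ∀ i, uncurry (waveOp (lam i) (μ i) (y i)) =O[𝓟 (Icc a b ×ˢ Icc t₀ t₁)]
      fun p => √(uncurry (waveSystemEnergy lam μ y g) p))
    (htransport : ∀ k, uncurry (pdx (g k)) =O[𝓟 (Icc a b ×ˢ Icc t₀ t₁)]
      fun p => √(uncurry (waveSystemEnergy lam μ y g) p))
    (hcauchy : ∀ t ∈ Icc t₀ t₁, waveSystemEnergy lam μ y g a t = 0)
    {x t : ℝ} (hx : x ∈ Icc a b) (hl : c * (x - a) < t - t₀) (hr : c * (x - a) < t₁ - t) :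
    waveSystemEnergy lam μ y g x t = 0 := by
  have nonneg (x t : ℝ) : 0 ≤ waveSystemEnergy lam μ y g x t :=
    waveSystemEnergy_nonneg (fun i => (hlam i).le) hμ x t
  obtain ⟨C, hC⟩ := exists_forall_abs_le_mul_of_isBigO (fun x _ t _ => nonneg x t)
    (lateralSource_isBigO_waveSystemEnergy hlam hμ hwave htransport)
  refine eq_zero_on_triangle_of_pdx_le (C := C) (f := fun x t => ∑ i, waveFlux (μ i) (y i) x t)
    hc.le (jointlySmooth_waveSystemEnergy hy hg).contDiff_one
    (ContDiff.sum fun i _ => (jointlySmooth_waveFlux (hy i)).contDiff_one)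
    (fun x _ t _ => nonneg x t) (fun x hx t ht => ?_)
    (fun x _ t _ => abs_sum_waveFlux_le_mul_waveSystemEnergy hc hμ hspeed x t) hcauchy hx hl hr
  rw [pdx_waveSystemEnergy hy hg]
  linarith [(abs_le.1 (hC x hx t ht)).2]

end LateralCauchyProblem

section BeamWaveSystem

/-- The triple `(w_x, w_xx, z_x)`, with the sup norm, which dominates the lower-order terms of the
beam-wave system. -/
noncomputable def strain (w z : ℝ → ℝ → ℝ) : ℝ × ℝ → ℝ × ℝ × ℝ := fun p =>
  (pdx w p.1 p.2, pdx (pdx w) p.1 p.2, pdx z p.1 p.2)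

theorem pdx_isBigO_strain (w z : ℝ → ℝ → ℝ) {l : Filter (ℝ × ℝ)} :
    uncurry (pdx w) =O[l] strain w z :=
  isBigO_fst_prod

theorem pdx_pdx_isBigO_strain (w z : ℝ → ℝ → ℝ) {l : Filter (ℝ × ℝ)} :
    uncurry (pdx (pdx w)) =O[l] strain w z :=
  isBigO_fst_prod.trans isBigO_snd_prod

theorem pdx_right_isBigO_strain (w z : ℝ → ℝ → ℝ) {l : Filter (ℝ × ℝ)} :
    uncurry (pdx z) =O[l] strain w z :=
  isBigO_snd_prod.trans isBigO_snd_prod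

theorem strain_isBigO_sqrt_waveSystemEnergy {κ : Type*} [Fintype κ] {lam μ ρ : ℝ}
    {w z : ℝ → ℝ → ℝ} {g : κ → ℝ → ℝ → ℝ} {k : κ} (hlam : 0 < lam) (hμ : 0 ≤ μ) (hρ : 0 ≤ ρ)
    (hgk : g k = pdx w) (s : Set (ℝ × ℝ)) :
    strain w z =O[𝓟 s]
      fun p => √(uncurry (waveSystemEnergy ![lam, 1] ![μ, ρ] ![pdx w, z] g) p) := by
  have hlams : ∀ i, 0 < ![lam, 1] i := by simp [Fin.forall_fin_two, hlam]
  have hμs : ∀ i, 0 ≤ ![μ, ρ] i := by simp [Fin.forall_fin_two, hμ, hρ]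
  have waves (i : Fin 2) :=
    pdx_isBigO_sqrt_waveSystemEnergy (y := ![pdx w, z]) (g := g) hlams hμs i s
  have slope := isBigO_sqrt_waveSystemEnergy (y := ![pdx w, z]) (g := g)
    (fun i => (hlams i).le) hμs k s
  rw [hgk] at slope
  exact slope.prod_left ((waves 0).prod_left (waves 1))

/-- The end `x` is hinged for the beam `w` and fixed for the wave `z`, for all `t ∈ [t₀, t₁]`. -/
structure HasHingedEnd (x t₀ t₁ : ℝ) (w z : ℝ → ℝ → ℝ) : Prop where
  w_eq_zero : ∀ t ∈ Icc t₀ t₁, w x t = 0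
  wxx_eq_zero : ∀ t ∈ Icc t₀ t₁, pdx (pdx w) x t = 0
  z_eq_zero : ∀ t ∈ Icc t₀ t₁, z x t = 0

/-- The full Cauchy data at `x` of a fourth-order equation for `w` and a second-order equation for
`z`, regarded as evolutions in `x`, vanish for all `t ∈ [t₀, t₁]`. -/
structure HasZeroCauchyData (x t₀ t₁ : ℝ) (w z : ℝ → ℝ → ℝ) : Prop
    extends HasHingedEnd x t₀ t₁ w z where
  wx_eq_zero : ∀ t ∈ Icc t₀ t₁, pdx w x t = 0
  wxxx_eq_zero : ∀ t ∈ Icc t₀ t₁, pdx (pdx (pdx w)) x t = 0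
  zx_eq_zero : ∀ t ∈ Icc t₀ t₁, pdx z x t = 0

/-- A Rayleigh beam `w` coupled to a wave `z` on `[L₀, L] × [t₀, t₁]` through terms controlled by
the strain: `S` is the extra shear force acting on the beam. -/
structure BeamWaveSystem (β μ lam ρ L₀ L t₀ t₁ : ℝ) (w z S : ℝ → ℝ → ℝ) : Prop where
  smooth_w : JointlySmooth w
  smooth_z : JointlySmooth z
  smooth_S : JointlySmooth S
  beam_eq : ∀ x ∈ Icc L₀ L, ∀ t ∈ Icc t₀ t₁,
    β * pdt (pdt w) x t + pdx (pdx (waveOp lam μ w)) x t = pdx S x t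
  wave_isBigO : uncurry (waveOp 1 ρ z) =O[𝓟 (Icc L₀ L ×ˢ Icc t₀ t₁)] strain w z
  shear_isBigO : uncurry S =O[𝓟 (Icc L₀ L ×ˢ Icc t₀ t₁)] strain w z

namespace BeamWaveSystem

variable {β μ lam ρ L₀ L t₀ t₁ : ℝ} {w z S : ℝ → ℝ → ℝ}

/-- The total shear, corrected by a multiple of the slope so that its `x`-derivative is a multiple
of the moment `waveOp lam μ w`. -/
noncomputable def correctedShear (β μ lam : ℝ) (w S : ℝ → ℝ → ℝ) : ℝ → ℝ → ℝ := fun x t =>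
  pdx (waveOp lam μ w) x t + β * lam / μ * pdx w x t - S x t

theorem jointlySmooth_correctedShear (hw : JointlySmooth w) (hS : JointlySmooth S) :
    JointlySmooth (correctedShear β μ lam w S) :=
  ((jointlySmooth_waveOp hw).dx.add (contDiff_const.mul hw.dx)).sub hS

theorem pdx_correctedShear (sys : BeamWaveSystem β μ lam ρ L₀ L t₀ t₁ w z S) (hμ : μ ≠ 0)
    {x t : ℝ} (hx : x ∈ Icc L₀ L) (ht : t ∈ Icc t₀ t₁) :
    pdx (correctedShear β μ lam w S) x t = β / μ * waveOp lam μ w x t := by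
  have shear_x : pdx (correctedShear β μ lam w S) x t = _ :=
    ((((jointlySmooth_waveOp sys.smooth_w).dx.hasDerivAt_dx x t).add
      ((sys.smooth_w.dx.hasDerivAt_dx x t).const_mul (β * lam / μ))).sub
      (sys.smooth_S.hasDerivAt_dx x t)).deriv
  rw [shear_x, ← sys.beam_eq x hx t ht, waveOp]
  field_simp
  ring

/-- The energy of the beam-wave system regarded as an evolution in `x`: the slope `w_x` and `z`
are the waves, and `w`, `w_x`, `z`, the moment and the corrected shear are transported. -/
noncomputable def lateralBeamEnergy (β μ lam ρ : ℝ) (w z S : ℝ → ℝ → ℝ) : ℝ → ℝ → ℝ :=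
  waveSystemEnergy ![lam, 1] ![μ, ρ] ![pdx w, z]
    ![w, pdx w, z, waveOp lam μ w, correctedShear β μ lam w S]

theorem isBigO_sqrt_lateralBeamEnergy (hlam : 0 ≤ lam) (hμ : 0 ≤ μ) (hρ : 0 ≤ ρ) (k : Fin 5)
    (s : Set (ℝ × ℝ)) :
    uncurry (![w, pdx w, z, waveOp lam μ w, correctedShear β μ lam w S] k) =O[𝓟 s]
      fun p => √(uncurry (lateralBeamEnergy β μ lam ρ w z S) p) :=
  isBigO_sqrt_waveSystemEnergy (by simp [Fin.forall_fin_two, hlam])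
    (by simp [Fin.forall_fin_two, hμ, hρ]) k s

theorem strain_isBigO_sqrt_lateralBeamEnergy (hlam : 0 < lam) (hμ : 0 ≤ μ) (hρ : 0 ≤ ρ)
    (s : Set (ℝ × ℝ)) :
    strain w z =O[𝓟 s] fun p => √(uncurry (lateralBeamEnergy β μ lam ρ w z S) p) :=
  strain_isBigO_sqrt_waveSystemEnergy (k := (1 : Fin 5)) hlam hμ hρ rfl s

theorem pdx_waveOp_isBigO_sqrt_lateralBeamEnergy
    (sys : BeamWaveSystem β μ lam ρ L₀ L t₀ t₁ w z S) (hlam : 0 < lam) (hμ : 0 ≤ μ) (hρ : 0 ≤ ρ) :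
    uncurry (pdx (waveOp lam μ w)) =O[𝓟 (Icc L₀ L ×ˢ Icc t₀ t₁)]
      fun p => √(uncurry (lateralBeamEnergy β μ lam ρ w z S) p) := by
  have slope_bound := isBigO_sqrt_lateralBeamEnergy (β := β) (w := w) (z := z) (S := S)
    hlam.le hμ hρ 1 (Icc L₀ L ×ˢ Icc t₀ t₁)
  have shear_bound := isBigO_sqrt_lateralBeamEnergy (β := β) (w := w) (z := z) (S := S)
    hlam.le hμ hρ 4 (Icc L₀ L ×ˢ Icc t₀ t₁)
  refine ((shear_bound.sub (slope_bound.const_mul_left (β * lam / μ))).add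
    (sys.shear_isBigO.trans (strain_isBigO_sqrt_lateralBeamEnergy hlam hμ hρ _))).congr_left
    fun p => ?_
  simp only [uncurry, correctedShear, Matrix.cons_val]
  ring

theorem lateralBeamEnergy_eq_zero_on_triangle
    (sys : BeamWaveSystem β μ lam ρ L₀ L t₀ t₁ w z S) {c : ℝ} (hc : 0 < c) (hlam : 0 < lam)
    (hμ : 0 < μ) (hρ : 0 ≤ ρ) (hμc : μ ≤ c ^ 2 * lam) (hρc : ρ ≤ c ^ 2)
    (hcauchy : ∀ t ∈ Icc t₀ t₁, lateralBeamEnergy β μ lam ρ w z S L₀ t = 0)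
    {x t : ℝ} (hx : x ∈ Icc L₀ L) (hl : c * (x - L₀) < t - t₀) (hr : c * (x - L₀) < t₁ - t) :
    lateralBeamEnergy β μ lam ρ w z S x t = 0 := by
  have hw := sys.smooth_w
  have hz := sys.smooth_z
  have hlams : ∀ i, 0 < ![lam, 1] i := by simp [Fin.forall_fin_two, hlam]
  have hμs : ∀ i, 0 ≤ ![μ, ρ] i := by simp [Fin.forall_fin_two, hμ.le, hρ]
  set K := Icc L₀ L ×ˢ Icc t₀ t₁
  set N : ℝ × ℝ → ℝ := fun p => √(uncurry (lateralBeamEnergy β μ lam ρ w z S) p)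
  have strain_bound : strain w z =O[𝓟 K] N :=
    strain_isBigO_sqrt_lateralBeamEnergy hlam hμ.le hρ K
  have moment_bound : uncurry (waveOp lam μ w) =O[𝓟 K] N :=
    isBigO_sqrt_lateralBeamEnergy hlam.le hμ.le hρ 3 K
  have moment_x_bound : uncurry (pdx (waveOp lam μ w)) =O[𝓟 K] N :=
    sys.pdx_waveOp_isBigO_sqrt_lateralBeamEnergy hlam hμ.le hρ
  have shear_x_bound : uncurry (pdx (correctedShear β μ lam w S)) =O[𝓟 K] N :=
    (moment_bound.const_mul_left (β / μ)).congr' (eventually_principal.2 fun p hp =>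
      (sys.pdx_correctedShear hμ.ne' hp.1 hp.2).symm) .rfl
  refine waveSystemEnergy_eq_zero_on_triangle hc hlams hμs ?_ ?_ ?_ ?_ ?_ hcauchy hx hl hr
  · simp [Fin.forall_fin_two, hμc, hρc]
  · exact Fin.forall_fin_two.2 ⟨hw.dx, hz⟩
  · simp [Fin.forall_fin_succ, hw, hw.dx, hz, jointlySmooth_waveOp hw,
      jointlySmooth_correctedShear hw sys.smooth_S]
  · exact Fin.forall_fin_two.2 ⟨pdx_waveOp hw ▸ moment_x_bound,
      sys.wave_isBigO.trans strain_bound⟩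
  · intro k
    fin_cases k
    exacts [(pdx_isBigO_strain w z).trans strain_bound,
      (pdx_pdx_isBigO_strain w z).trans strain_bound,
      (pdx_right_isBigO_strain w z).trans strain_bound, moment_x_bound, shear_x_bound]

theorem lateralBeamEnergy_eq_zero_of_hasZeroCauchyData
    (sys : BeamWaveSystem β μ lam ρ L₀ L t₀ t₁ w z S) (hL : L₀ ≤ L) (ht₀₁ : t₀ < t₁)
    (left : HasZeroCauchyData L₀ t₀ t₁ w z) :
    ∀ t ∈ Icc t₀ t₁, lateralBeamEnergy β μ lam ρ w z S L₀ t = 0 := fun t ht => by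
  obtain ⟨⟨hw, hwxx, hz⟩, hwx, hwxxx, hzx⟩ := left
  have smooth := sys.smooth_w
  have wt := smooth.pdt_eq_zero_of_eq_zero_on_Icc ht₀₁ hw
  have wtt : pdt (pdt w) L₀ t = 0 := smooth.dt.pdt_eq_zero_of_eq_zero_on_Icc ht₀₁ wt t ht
  have wxt := smooth.dx.pdt_eq_zero_of_eq_zero_on_Icc ht₀₁ hwx
  have wxtt : pdt (pdt (pdx w)) L₀ t = 0 :=
    smooth.dx.dt.pdt_eq_zero_of_eq_zero_on_Icc ht₀₁ wxt t ht
  have zt : pdt z L₀ t = 0 := sys.smooth_z.pdt_eq_zero_of_eq_zero_on_Icc ht₀₁ hz t ht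
  have moment : waveOp lam μ w L₀ t = 0 := by simp [waveOp, hwxx t ht, wtt]
  have moment_x : pdx (waveOp lam μ w) L₀ t = 0 := by
    simp [pdx_waveOp smooth, waveOp, hwxxx t ht, wxtt]
  have shear : S L₀ t = 0 := by
    obtain ⟨C, hC⟩ := isBigO_principal.1 sys.shear_isBigO
    simpa [strain, hwx t ht, hwxx t ht, hzx t ht] using hC (L₀, t) ⟨left_mem_Icc.2 hL, ht⟩
  simp [lateralBeamEnergy, waveSystemEnergy, Fin.sum_univ_succ, waveEnergy, correctedShear, hw t ht,
    hwx t ht, hwxx t ht, wxt t ht, hz t ht, hzx t ht, zt, moment, moment_x, shear]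

theorem eq_zero_of_lateralBeamEnergy_eq_zero (hlam : 0 ≤ lam) (hμ : 0 ≤ μ) (hρ : 0 ≤ ρ)
    {x t : ℝ} (hzero : lateralBeamEnergy β μ lam ρ w z S x t = 0) : w x t = 0 ∧ z x t = 0 := by
  have hlams : ∀ i, 0 ≤ ![lam, 1] i := by simp [Fin.forall_fin_two, hlam]
  have hμs : ∀ i, 0 ≤ ![μ, ρ] i := by simp [Fin.forall_fin_two, hμ, hρ]
  exact ⟨sq_nonpos_iff _ |>.1 <| (sq_le_waveSystemEnergy hlams hμs 0 x t).trans_eq hzero,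
    sq_nonpos_iff _ |>.1 <| (sq_le_waveSystemEnergy hlams hμs 2 x t).trans_eq hzero⟩

/-- The energy of the beam-wave system as an evolution in `t`, augmented by `w² + w_x² + z²`,
which the lower-order terms need. -/
noncomputable def energy (β μ lam ρ : ℝ) (w z : ℝ → ℝ → ℝ) : ℝ → ℝ → ℝ := fun x t =>
  β / 2 * pdt w x t ^ 2 + waveEnergy lam μ (pdx w) x t + waveEnergy 1 ρ z x t
    + (w x t ^ 2 + pdx w x t ^ 2 + z x t ^ 2)

/-- The spatial flux of `energy`. -/
noncomputable def flux (μ lam : ℝ) (w z S : ℝ → ℝ → ℝ) : ℝ → ℝ → ℝ := fun x t =>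
  waveFlux lam (pdx w) x t + waveFlux 1 z x t + pdt w x t * (S x t - pdx (waveOp lam μ w) x t)

theorem jointlySmooth_energy (hw : JointlySmooth w) (hz : JointlySmooth z) :
    JointlySmooth (energy β μ lam ρ w z) :=
  (((contDiff_const.mul (hw.dt.pow 2)).add (jointlySmooth_waveEnergy hw.dx)).add
    (jointlySmooth_waveEnergy hz)).add (((hw.pow 2).add (hw.dx.pow 2)).add (hz.pow 2))

theorem jointlySmooth_flux (hw : JointlySmooth w) (hz : JointlySmooth z) (hS : JointlySmooth S) :
    JointlySmooth (flux μ lam w z S) :=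
  ((jointlySmooth_waveFlux hw.dx).add (jointlySmooth_waveFlux hz)).add
    (hw.dt.mul (hS.sub (jointlySmooth_waveOp hw).dx))

theorem pdt_energy_sub_pdx_flux (sys : BeamWaveSystem β μ lam ρ L₀ L t₀ t₁ w z S)
    {x t : ℝ} (hx : x ∈ Icc L₀ L) (ht : t ∈ Icc t₀ t₁) :
    pdt (energy β μ lam ρ w z) x t - pdx (flux μ lam w z S) x t
      = 2 * (w x t * pdt w x t + pdx w x t * pdt (pdx w) x t + z x t * pdt z x t)
        - pdt (pdx w) x t * S x t - pdt z x t * waveOp 1 ρ z x t := by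
  have hw := sys.smooth_w
  have hz := sys.smooth_z
  have energy_t : pdt (energy β μ lam ρ w z) x t = _ :=
    (((((hw.dt.hasDerivAt_dt x t).pow 2).const_mul (β / 2)).add
      ((jointlySmooth_waveEnergy hw.dx).hasDerivAt_dt x t)).add
      ((jointlySmooth_waveEnergy hz).hasDerivAt_dt x t)).add
      ((((hw.hasDerivAt_dt x t).pow 2).add ((hw.dx.hasDerivAt_dt x t).pow 2)).add
        ((hz.hasDerivAt_dt x t).pow 2)) |>.deriv
  have flux_x : pdx (flux μ lam w z S) x t = _ :=
    (((jointlySmooth_waveFlux hw.dx).hasDerivAt_dx x t).add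
      ((jointlySmooth_waveFlux hz).hasDerivAt_dx x t)).add
      ((hw.dt.hasDerivAt_dx x t).mul ((sys.smooth_S.hasDerivAt_dx x t).sub
        ((jointlySmooth_waveOp hw).dx.hasDerivAt_dx x t))) |>.deriv
  rw [energy_t, flux_x, pdt_waveEnergy hw.dx, pdt_waveEnergy hz, ← pdx_waveOp hw, hw.comm,
    ← sys.beam_eq x hx t ht]
  simp only [Pi.sub_apply]
  push_cast
  ring

theorem energy_eq_add_waveSystemEnergy (x t : ℝ) :
    energy β μ lam ρ w z x t = β / 2 * pdt w x t ^ 2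
      + waveSystemEnergy ![lam, 1] ![μ, ρ] ![pdx w, z] ![w, pdx w, z] x t := by
  simp only [energy, waveSystemEnergy, Fin.sum_univ_two, Fin.sum_univ_three, Matrix.cons_val]
  ring

theorem energy_nonneg (hβ : 0 ≤ β) (hμ : 0 ≤ μ) (hlam : 0 ≤ lam) (hρ : 0 ≤ ρ) (x t : ℝ) :
    0 ≤ energy β μ lam ρ w z x t := by
  unfold energy waveEnergy
  positivity

theorem sqrt_waveSystemEnergy_isBigO_sqrt_energy (hβ : 0 ≤ β) (s : Set (ℝ × ℝ)) :
    (fun p => √(uncurry (waveSystemEnergy ![lam, 1] ![μ, ρ] ![pdx w, z] ![w, pdx w, z]) p))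
      =O[𝓟 s] fun p => √(uncurry (energy β μ lam ρ w z) p) := .of_norm_le fun p => by
  rw [Real.norm_of_nonneg (Real.sqrt_nonneg _)]
  refine Real.sqrt_le_sqrt ?_
  simp only [uncurry, energy_eq_add_waveSystemEnergy]
  exact le_add_of_nonneg_left (by positivity)

theorem pdt_isBigO_sqrt_energy (hβ : 0 < β) (hμ : 0 ≤ μ) (hlam : 0 ≤ lam) (hρ : 0 ≤ ρ)
    (s : Set (ℝ × ℝ)) :
    uncurry (pdt w) =O[𝓟 s] fun p => √(uncurry (energy β μ lam ρ w z) p) :=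
  isBigO_sqrt_of_mul_sq_le (half_pos hβ) fun p _ => by
    simp only [uncurry, energy_eq_add_waveSystemEnergy]
    exact le_add_of_nonneg_right (waveSystemEnergy_nonneg
      (by simp [Fin.forall_fin_two, hlam]) (by simp [Fin.forall_fin_two, hμ, hρ]) p.1 p.2)

theorem pdt_energy_sub_pdx_flux_isBigO (sys : BeamWaveSystem β μ lam ρ L₀ L t₀ t₁ w z S)
    (hβ : 0 < β) (hμ : 0 < μ) (hlam : 0 < lam) (hρ : 0 < ρ) :
    uncurry (fun x t => pdt (energy β μ lam ρ w z) x t - pdx (flux μ lam w z S) x t)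
      =O[𝓟 (Icc L₀ L ×ˢ Icc t₀ t₁)] uncurry (energy β μ lam ρ w z) := by
  have hlams : ∀ i, 0 < ![lam, 1] i := by simp [Fin.forall_fin_two, hlam]
  have hμs : ∀ i, 0 < ![μ, ρ] i := by simp [Fin.forall_fin_two, hμ, hρ]
  set K := Icc L₀ L ×ˢ Icc t₀ t₁
  set N : ℝ × ℝ → ℝ := fun p => √(uncurry (energy β μ lam ρ w z) p)
  have system_le := sqrt_waveSystemEnergy_isBigO_sqrt_energy (μ := μ) (lam := lam) (ρ := ρ)
    (w := w) (z := z) hβ.le K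
  have waves_t (i : Fin 2) : uncurry (pdt (![pdx w, z] i)) =O[𝓟 K] N :=
    (pdt_isBigO_sqrt_waveSystemEnergy (fun i => (hlams i).le) hμs i K).trans system_le
  have scalars (k : Fin 3) : uncurry (![w, pdx w, z] k) =O[𝓟 K] N :=
    (isBigO_sqrt_waveSystemEnergy (fun i => (hlams i).le) (fun i => (hμs i).le) k K).trans
      system_le
  have wt : uncurry (pdt w) =O[𝓟 K] N := pdt_isBigO_sqrt_energy hβ hμ.le hlam.le hρ.le K
  have strain_bound : strain w z =O[𝓟 K] N :=
    (strain_isBigO_sqrt_waveSystemEnergy (k := (1 : Fin 3)) hlam hμ.le hρ.le rfl K).trans system_le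
  have product {f g : ℝ × ℝ → ℝ} (hf : f =O[𝓟 K] N) (hg : g =O[𝓟 K] N) :
      (fun p => f p * g p) =O[𝓟 K] uncurry (energy β μ lam ρ w z) :=
    mul_isBigO_of_isBigO_sqrt (fun p _ => energy_nonneg hβ.le hμ.le hlam.le hρ.le p.1 p.2) hf hg
  have lower_order := (((product (scalars 0) wt).add (product (scalars 1) (waves_t 0))).add
    (product (scalars 2) (waves_t 1))).const_mul_left 2
  have shear_work := product (waves_t 0) (sys.shear_isBigO.trans strain_bound)
  have wave_work := product (waves_t 1) (sys.wave_isBigO.trans strain_bound)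
  exact ((lower_order.sub shear_work).sub wave_work).congr' (eventually_principal.2 fun p hp =>
    (sys.pdt_energy_sub_pdx_flux hp.1 hp.2).symm) .rfl

theorem energy_eq_zero_of_cauchy_data (hw : JointlySmooth w) (hz : JointlySmooth z) (hL : L₀ < L)
    {τ : ℝ} (w_zero : ∀ x ∈ Icc L₀ L, w x τ = 0) (wt_zero : ∀ x ∈ Icc L₀ L, pdt w x τ = 0)
    (z_zero : ∀ x ∈ Icc L₀ L, z x τ = 0) (zt_zero : ∀ x ∈ Icc L₀ L, pdt z x τ = 0)
    {x : ℝ} (hx : x ∈ Icc L₀ L) : energy β μ lam ρ w z x τ = 0 := by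
  have wx := hw.pdx_eq_zero_of_eq_zero_on_Icc hL w_zero
  have wxx := hw.dx.pdx_eq_zero_of_eq_zero_on_Icc hL wx x hx
  have wxt := hw.dt.pdx_eq_zero_of_eq_zero_on_Icc hL wt_zero x hx
  have zx := hz.pdx_eq_zero_of_eq_zero_on_Icc hL z_zero x hx
  rw [hw.comm] at wxt
  simp [energy, waveEnergy, w_zero x hx, wt_zero x hx, z_zero x hx, zt_zero x hx, wx x hx, wxx,
    wxt, zx]

theorem flux_eq_zero_of_hasHingedEnd (hw : JointlySmooth w) (hz : JointlySmooth z)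
    (ht₀₁ : t₀ < t₁) {x : ℝ} (hinged : HasHingedEnd x t₀ t₁ w z) :
    ∀ t ∈ Icc t₀ t₁, flux μ lam w z S x t = 0 := fun t ht => by
  have wt := hw.pdt_eq_zero_of_eq_zero_on_Icc ht₀₁ hinged.w_eq_zero t ht
  have zt := hz.pdt_eq_zero_of_eq_zero_on_Icc ht₀₁ hinged.z_eq_zero t ht
  simp [flux, waveFlux, wt, zt, hinged.wxx_eq_zero t ht]

theorem eq_zero_of_energy_eq_zero (sys : BeamWaveSystem β μ lam ρ L₀ L t₀ t₁ w z S)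
    (hβ : 0 < β) (hμ : 0 < μ) (hlam : 0 < lam) (hρ : 0 < ρ) (hL : L₀ < L)
    (left : HasHingedEnd L₀ t₀ t₁ w z) (right : HasHingedEnd L t₀ t₁ w z) {τ : ℝ} (ht₀₁ : t₀ < t₁)
    (hτ : τ ∈ Icc t₀ t₁) (hinit : ∀ x ∈ Icc L₀ L, energy β μ lam ρ w z x τ = 0)
    {x t : ℝ} (hx : x ∈ Icc L₀ L) (ht : t ∈ Icc t₀ t₁) : w x t = 0 ∧ z x t = 0 := by
  have nonneg (x t : ℝ) : 0 ≤ energy β μ lam ρ w z x t :=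
    energy_nonneg hβ.le hμ.le hlam.le hρ.le x t
  obtain ⟨C, hC⟩ := exists_forall_abs_le_mul_of_isBigO (fun x _ t _ => nonneg x t)
    (sys.pdt_energy_sub_pdx_flux_isBigO hβ hμ hlam hρ)
  have energy_zero : energy β μ lam ρ w z x t = 0 := eq_zero_of_abs_pdt_sub_pdx_le hL
    (jointlySmooth_energy sys.smooth_w sys.smooth_z).contDiff_one
    (jointlySmooth_flux sys.smooth_w sys.smooth_z sys.smooth_S).contDiff_one
    (fun x _ t _ => nonneg x t) hC
    (flux_eq_zero_of_hasHingedEnd sys.smooth_w sys.smooth_z ht₀₁ left)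
    (flux_eq_zero_of_hasHingedEnd sys.smooth_w sys.smooth_z ht₀₁ right) hτ hinit hx ht
  have squares_le : w x t ^ 2 + z x t ^ 2 ≤ energy β μ lam ρ w z x t := by
    rw [← sub_nonneg]
    unfold energy waveEnergy
    ring_nf
    positivity
  constructor <;> nlinarith [sq_nonneg (w x t), sq_nonneg (z x t)]

theorem eq_zero_on_strip (sys : BeamWaveSystem β μ lam ρ L₀ L t₀ t₁ w z S) {c : ℝ} (hc : 0 < c)
    (hlam : 0 < lam) (hμ : 0 < μ) (hρ : 0 ≤ ρ) (hμc : μ ≤ c ^ 2 * lam) (hρc : ρ ≤ c ^ 2)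
    (left : HasZeroCauchyData L₀ t₀ t₁ w z) {x t : ℝ} (hx : x ∈ Icc L₀ L)
    (ht : t ∈ Ioo (t₀ + c * (L - L₀)) (t₁ - c * (L - L₀))) : w x t = 0 ∧ z x t = 0 := by
  have hL : L₀ ≤ L := hx.1.trans hx.2
  have width : 0 ≤ c * (L - L₀) := mul_nonneg hc.le (sub_nonneg.2 hL)
  have hxL : c * (x - L₀) ≤ c * (L - L₀) := by gcongr; exact hx.2
  have ht₀₁ : t₀ < t₁ := by linarith [ht.1, ht.2]
  exact eq_zero_of_lateralBeamEnergy_eq_zero hlam.le hμ.le hρ <|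
    sys.lateralBeamEnergy_eq_zero_on_triangle hc hlam hμ hρ hμc hρc
      (sys.lateralBeamEnergy_eq_zero_of_hasZeroCauchyData hL ht₀₁ left) hx
      (by linarith [ht.1]) (by linarith [ht.2])

theorem eq_zero_of_overdetermined (sys : BeamWaveSystem β μ lam ρ L₀ L t₀ t₁ w z S)
    (hβ : 0 < β) (hμ : 0 < μ) (hlam : 0 < lam) (hρ : 0 < ρ) (hL : L₀ < L) {c : ℝ} (hc : 0 < c)
    (hμc : μ ≤ c ^ 2 * lam) (hρc : ρ ≤ c ^ 2) (hlong : 2 * c * (L - L₀) < t₁ - t₀)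
    (left : HasZeroCauchyData L₀ t₀ t₁ w z) (right : HasHingedEnd L t₀ t₁ w z)
    {x t : ℝ} (hx : x ∈ Icc L₀ L) (ht : t ∈ Icc t₀ t₁) : w x t = 0 ∧ z x t = 0 := by
  have width : 0 < c * (L - L₀) := mul_pos hc (sub_pos.2 hL)
  set strip := Ioo (t₀ + c * (L - L₀)) (t₁ - c * (L - L₀))
  have zero_on_strip : ∀ y ∈ Icc L₀ L, ∀ s ∈ strip, w y s = 0 ∧ z y s = 0 := fun y hy s hs =>
    sys.eq_zero_on_strip hc hlam hμ hρ.le hμc hρc left hy hs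
  set τ := (t₀ + t₁) / 2 with hτ
  have τ_mem : τ ∈ strip := ⟨by linarith, by linarith⟩
  have pdt_zero {f : ℝ → ℝ → ℝ} {y : ℝ} (hf : ∀ s ∈ strip, f y s = 0) : pdt f y τ = 0 := by
    have locally_zero : f y =ᶠ[𝓝 τ] fun _ => 0 :=
      eventually_of_mem (isOpen_Ioo.mem_nhds τ_mem) hf
    exact locally_zero.deriv_eq.trans (deriv_const τ 0)
  have initial_zero : ∀ y ∈ Icc L₀ L, energy β μ lam ρ w z y τ = 0 := fun y hy =>
    energy_eq_zero_of_cauchy_data sys.smooth_w sys.smooth_z hL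
      (fun y hy => (zero_on_strip y hy τ τ_mem).1)
      (fun y hy => pdt_zero fun s hs => (zero_on_strip y hy s hs).1)
      (fun y hy => (zero_on_strip y hy τ τ_mem).2)
      (fun y hy => pdt_zero fun s hs => (zero_on_strip y hy s hs).2) hy
  exact sys.eq_zero_of_energy_eq_zero hβ hμ hlam hρ hL left.toHasHingedEnd right
    (τ := τ) (by linarith) ⟨by linarith, by linarith⟩ initial_zero hx ht

end BeamWaveSystem

end BeamWaveSystem

section TimeDifference

variable {h : ℝ} {f g : ℝ → ℝ → ℝ}

theorem jointlySmooth_tdiff (hf : JointlySmooth f) : JointlySmooth (tdiff h f) :=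
  (hf.comp (by fun_prop : ContDiff ℝ ∞ fun p : ℝ × ℝ => (p.1, p.2 + h))).sub hf

theorem pdx_tdiff (hf : JointlySmooth f) : pdx (tdiff h f) = tdiff h (pdx f) := by
  ext x t
  exact ((hf.hasDerivAt_dx x (t + h)).sub (hf.hasDerivAt_dx x t)).deriv

theorem pdt_tdiff (hf : JointlySmooth f) : pdt (tdiff h f) = tdiff h (pdt f) := by
  ext x t
  exact (((hf.hasDerivAt_dt x (t + h)).comp_add_const t h).sub (hf.hasDerivAt_dt x t)).deriv

theorem waveOp_tdiff {lam μ : ℝ} (hf : JointlySmooth f) :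
    waveOp lam μ (tdiff h f) = tdiff h (waveOp lam μ f) := by
  ext x t
  rw [waveOp, pdx_tdiff hf, pdx_tdiff hf.dx, pdt_tdiff hf, pdt_tdiff hf.dt]
  simp only [tdiff, waveOp]
  ring

theorem tdiff_mul_isBigO {E : Type*} [NormedAddCommGroup E] {s : Set (ℝ × ℝ)} (hs : IsCompact s)
    {N : ℝ × ℝ → E} (hf : Continuous (uncurry f)) (hg : Continuous (uncurry g))
    (hfN : uncurry (tdiff h f) =O[𝓟 s] N) (hgN : uncurry (tdiff h g) =O[𝓟 s] N) :
    uncurry (tdiff h fun x t => f x t * g x t) =O[𝓟 s] N := by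
  have hg_shift : Continuous fun p : ℝ × ℝ => g p.1 (p.2 + h) :=
    hg.comp (by fun_prop : Continuous fun p : ℝ × ℝ => (p.1, p.2 + h))
  refine ((continuous_mul_isBigO_of_isCompact hs hg_shift hfN).add
    (continuous_mul_isBigO_of_isCompact hs hf hgN)).congr_left fun p => ?_
  simp only [uncurry, tdiff]
  ring

end TimeDifference

section VonKarman

variable {β₂ μ₂ lam₂ ρ₂ L₀ L T h : ℝ} {u v : ℝ → ℝ → ℝ}

/-- The axial force `v_x + u_x² / 2` of the von Karman beam. -/
noncomputable def axialForce (u v : ℝ → ℝ → ℝ) : ℝ → ℝ → ℝ := fun x t =>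
  pdx v x t + pdx u x t ^ 2 / 2

theorem jointlySmooth_axialForce (hu : JointlySmooth u) (hv : JointlySmooth v) :
    JointlySmooth (axialForce u v) :=
  hv.dx.add ((hu.dx.pow 2).div_const 2)

theorem VKBeam.beam_eq (sol : VKBeam β₂ μ₂ lam₂ ρ₂ L₀ L T u v) (hu : JointlySmooth u) {x t : ℝ}
    (hx : x ∈ Icc L₀ L) (ht : t ∈ Icc 0 T) :
    β₂ * pdt (pdt u) x t + pdx (pdx (waveOp lam₂ μ₂ u)) x t
      = pdx (fun x t => pdx u x t * axialForce u v x t) x t := by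
  have moment_xx : pdx (pdx (waveOp lam₂ μ₂ u)) x t
      = lam₂ * pdx (pdx (pdx (pdx u))) x t - μ₂ * pdx (pdx (pdt (pdt u))) x t := by
    rw [pdx_waveOp hu, pdx_waveOp hu.dx, waveOp, hu.dt.comm, hu.comm, hu.dx.dt.comm, hu.dx.comm]
  rw [moment_xx]
  unfold axialForce
  linarith [(sol x hx t ht).1]

theorem VKBeam.wave_eq (sol : VKBeam β₂ μ₂ lam₂ ρ₂ L₀ L T u v) (hu : JointlySmooth u)
    (hv : JointlySmooth v) {x t : ℝ} (hx : x ∈ Icc L₀ L) (ht : t ∈ Icc 0 T) :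
    waveOp 1 ρ₂ v x t = -(pdx u x t * pdx (pdx u) x t) := by
  have force_x : pdx (axialForce u v) x t = _ :=
    ((hv.dx.hasDerivAt_dx x t).add (((hu.dx.hasDerivAt_dx x t).pow 2).div_const 2)).deriv
  have wave : ρ₂ * pdt (pdt v) x t - pdx (axialForce u v) x t = 0 := (sol x hx t ht).2
  rw [force_x] at wave
  rw [waveOp]
  push_cast at wave
  linarith

theorem tdiff_pdx_isBigO_strain (hu : JointlySmooth u) {l : Filter (ℝ × ℝ)} :
    uncurry (tdiff h (pdx u)) =O[l] strain (tdiff h u) (tdiff h v) :=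
  pdx_tdiff hu ▸ pdx_isBigO_strain _ _

theorem tdiff_axialForce_isBigO_strain {s : Set (ℝ × ℝ)} (hs : IsCompact s)
    (hu : JointlySmooth u) (hv : JointlySmooth v) :
    uncurry (tdiff h (axialForce u v)) =O[𝓟 s] strain (tdiff h u) (tdiff h v) := by
  have vx : uncurry (tdiff h (pdx v)) =O[𝓟 s] strain (tdiff h u) (tdiff h v) :=
    pdx_tdiff hv ▸ pdx_right_isBigO_strain _ _
  have ux_sq := tdiff_mul_isBigO hs hu.dx.continuous hu.dx.continuous
    (tdiff_pdx_isBigO_strain (h := h) (v := v) hu) (tdiff_pdx_isBigO_strain hu)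
  refine (vx.add (ux_sq.const_mul_left (1 / 2))).congr_left fun p => ?_
  simp only [uncurry, tdiff, axialForce]
  ring

theorem tdiff_pdx_mul_pdx_pdx_isBigO_strain {s : Set (ℝ × ℝ)} (hs : IsCompact s)
    (hu : JointlySmooth u) :
    uncurry (tdiff h fun x t => pdx u x t * pdx (pdx u) x t)
      =O[𝓟 s] strain (tdiff h u) (tdiff h v) := by
  have uxx : uncurry (tdiff h (pdx (pdx u))) =O[𝓟 s] strain (tdiff h u) (tdiff h v) := by
    rw [← pdx_tdiff hu.dx, ← pdx_tdiff hu]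
    exact pdx_pdx_isBigO_strain _ _
  exact tdiff_mul_isBigO hs hu.dx.continuous hu.dx.dx.continuous (tdiff_pdx_isBigO_strain hu) uxx

theorem VKBeam.beamWaveSystem_tdiff (sol : VKBeam β₂ μ₂ lam₂ ρ₂ L₀ L (T + h) u v) (hh : 0 ≤ h)
    (hu : JointlySmooth u) (hv : JointlySmooth v) :
    BeamWaveSystem β₂ μ₂ lam₂ ρ₂ L₀ L 0 T (tdiff h u) (tdiff h v)
      (tdiff h fun x t => pdx u x t * axialForce u v x t) := by
  have hforce : JointlySmooth (axialForce u v) := jointlySmooth_axialForce hu hv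
  have hshear : JointlySmooth fun x t => pdx u x t * axialForce u v x t := hu.dx.mul hforce
  have now {t : ℝ} (ht : t ∈ Icc 0 T) : t ∈ Icc 0 (T + h) := ⟨ht.1, by linarith [ht.2]⟩
  have later {t : ℝ} (ht : t ∈ Icc 0 T) : t + h ∈ Icc 0 (T + h) :=
    ⟨by linarith [ht.1], by linarith [ht.2]⟩
  have compact : IsCompact (Icc L₀ L ×ˢ Icc 0 T) := isCompact_Icc.prod isCompact_Icc
  refine ⟨jointlySmooth_tdiff hu, jointlySmooth_tdiff hv, jointlySmooth_tdiff hshear,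
    fun x hx t ht => ?_, ?_, tdiff_mul_isBigO compact hu.dx.continuous hforce.continuous
      (tdiff_pdx_isBigO_strain hu) (tdiff_axialForce_isBigO_strain compact hu hv)⟩
  · rw [pdt_tdiff hu, pdt_tdiff hu.dt, waveOp_tdiff hu, pdx_tdiff (jointlySmooth_waveOp hu),
      pdx_tdiff (jointlySmooth_waveOp hu).dx, pdx_tdiff hshear]
    simp only [tdiff, ← sol.beam_eq hu hx (now ht), ← sol.beam_eq hu hx (later ht)]
    ring
  · refine (tdiff_pdx_mul_pdx_pdx_isBigO_strain compact hu).neg_left.congr'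
      (eventually_principal.2 fun p hp => ?_) .rfl
    simp only [waveOp_tdiff hv, uncurry, tdiff, sol.wave_eq hu hv hp.1 (now hp.2),
      sol.wave_eq hu hv hp.1 (later hp.2)]
    ring

end VonKarman

theorem stmt_17_general {L₀ L β₂ μ₂ lam₂ ρ₂ h T : ℝ} (hL : L₀ < L) (hβ₂ : 0 < β₂) (hμ₂ : 0 < μ₂)
    (hlam₂ : 0 < lam₂) (hρ₂ : 0 < ρ₂) (hh : 0 ≤ h)
    (hT : 2 * max √(μ₂ / lam₂) √ρ₂ * (L - L₀) < T) {u v : ℝ → ℝ → ℝ}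
    (hu : JointlySmooth u) (hv : JointlySmooth v) (sol : VKBeam β₂ μ₂ lam₂ ρ₂ L₀ L (T + h) u v)
    (left : HasZeroCauchyData L₀ 0 T (tdiff h u) (tdiff h v))
    (right : HasHingedEnd L 0 T (tdiff h u) (tdiff h v)) :
    ∀ x ∈ Icc L₀ L, ∀ t ∈ Icc 0 T, tdiff h u x t = 0 ∧ tdiff h v x t = 0 := by
  set c := max √(μ₂ / lam₂) √ρ₂
  have hc : 0 < c := lt_max_of_lt_right (Real.sqrt_pos.2 hρ₂)
  have hμc : μ₂ ≤ c ^ 2 * lam₂ :=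
    (div_le_iff₀ hlam₂).1 ((Real.sqrt_le_left hc.le).1 (le_max_left _ _))
  have hρc : ρ₂ ≤ c ^ 2 := (Real.sqrt_le_left hc.le).1 (le_max_right _ _)
  exact fun x hx t ht => (sol.beamWaveSystem_tdiff hh hu hv).eq_zero_of_overdetermined hβ₂ hμ₂
    hlam₂ hρ₂ hL hc hμc hρc (by rwa [sub_zero]) left right hx ht

/-- Unique continuation for the overdetermined elastic von Karman beam problem:
for `T` large enough (depending only on the data), the time difference of an
`M`-bounded solution satisfying the overdetermined boundary conditions vanishes. -/
theorem stmt_17 (L₀ L β₂ μ₂ lam₂ ρ₂ h M : ℝ)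
    (hL₀ : 0 < L₀) (hL : L₀ < L)
    (hβ₂ : 0 < β₂) (hμ₂ : 0 < μ₂) (hlam₂ : 0 < lam₂) (hρ₂ : 0 < ρ₂)
    (hh : 0 < h) (hM : 0 < M) :
    ∃ T₀ > (0:ℝ), ∀ T : ℝ, T₀ ≤ T →
      ∀ u v : ℝ → ℝ → ℝ,
        (∀ n : ℕ, ContDiff ℝ n (Function.uncurry u)) →
        (∀ n : ℕ, ContDiff ℝ n (Function.uncurry v)) →
        VKBeam β₂ μ₂ lam₂ ρ₂ L₀ L (T + h) u v →
        MBounded M L₀ L (T + h) u → MBounded M L₀ L (T + h) v →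
        (∀ t ∈ Set.Icc (0:ℝ) T,
          tdiff h u L₀ t = 0 ∧ pdx (tdiff h u) L₀ t = 0 ∧
          pdx (pdx (tdiff h u)) L₀ t = 0 ∧ pdx (pdx (pdx (tdiff h u))) L₀ t = 0 ∧
          tdiff h v L₀ t = 0 ∧ pdx (tdiff h v) L₀ t = 0 ∧
          tdiff h u L t = 0 ∧ pdx (pdx (tdiff h u)) L t = 0 ∧ tdiff h v L t = 0) →
        ∀ x ∈ Set.Icc L₀ L, ∀ t ∈ Set.Icc (0:ℝ) T,
          tdiff h u x t = 0 ∧ tdiff h v x t = 0 := by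
  have hwidth : 0 ≤ 2 * max √(μ₂ / lam₂) √ρ₂ * (L - L₀) :=
    mul_nonneg (by positivity) (sub_nonneg.2 hL.le)
  refine ⟨2 * max √(μ₂ / lam₂) √ρ₂ * (L - L₀) + 1, add_pos_of_nonneg_of_pos hwidth one_pos,
    fun T hT u v hu hv sol _ _ bc => ?_⟩
  choose w wx wxx wxxx z zx wR wxxR zR using bc
  exact stmt_17_general hL hβ₂ hμ₂ hlam₂ hρ₂ hh.le (by linarith) (contDiff_infty.2 hu)
    (contDiff_infty.2 hv) sol ⟨⟨w, wxx, z⟩, wx, wxxx, zx⟩ ⟨wR, wxxR, zR⟩
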